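/- For every integer k ≥ 3, the quotient ring ℂ[x_0,…,x_k,a,b,c,z]/I(k) is an integral domain whose Krull dimension equals 5; that is, the affine variety V(k) ⊆ 𝔸^{k+5} is reduced and irreducible of dimension 5. Moreover, for k = 2 the quotient ℂ[x_0,x_1,x_2,a,b,c,z]/(a·x_0 + b·x_1 + c·x_2, z − (x_0x_2 − x_1²)) is likewise an integral domain of Krull dimension 5. -/

import Mathlib

/-!
Write `A = ℂ[x,a,b,c,z]/I(k)` and let `S = ℂ[s,t,a,b,c]/(a s² + b s t + c t²)`, a domain because the
quadric is irreducible. Everything works for all `k ≥ 2`, and for `k = 2` the ideal `I(2)` is the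
one in the last assertion.

A solution of the recurrence is a combination of the `k`-th powers of the two roots of the quadratic
form `a s² + b s t + c t²`, which over `S` are `(s : t)` and `(c t : a s)`. This gives a homomorphism
`φ : A → S[v]` (`Vk.phiA`) with
`x_i ↦ s^(k-i) t^i + v (c t)^(k-i) (a s)^i` and `z ↦ v (a s² - c t²)² (s t)^(k-2)`;
the Cramer relations hold because `det N(p,q)` is `a^p c^(k-1-q)` times a tridiagonal continuant
(`Vk.det_Nsub`), which is computed from the roots in `Vk.cont_root`.

At `v = 0` the map becomes `x_i ↦ s^(k-i) t^i`, `z ↦ 0`, and its kernel is exactly `zA`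
(`Vk.z_dvd_of_psi`). Indeed, modulo `z` the Cramer relations are those of the rational normal curve,
and reduce every monomial in the `x_i` to one depending only on its degree and weight; so the map
has a linear section `ℂ[s,t,a,b,c] → A/zA` (`Vk.sec`), and the recurrence relations say that this
section kills the multiples of the quadric.

Consequently `ker φ ⊆ zA`. As `φ z` is not a zero divisor, an element of `ker φ` is divisible by
every power of `z`. The grading of `A` with `deg x_i = 1`, `deg z = 2`, `deg a = deg b = deg c = 0`
then forces it to vanish (`Vk.injective_of_grading`). Hence `A` embeds in the domain `S[v]`.

For the dimension: `c ≠ 0` in `A`, so the relations make `A` algebraic over the subalgebra generated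
by `x_0, x_1, a, b, c`, which gives `dim A ≤ 5` by Noether normalization and incomparability; and
the surjections `A → A/zA → ℂ[x_0,b,c]` between domains, with nonzero kernels, give `dim A ≥ 5`.
-/

/-!
The polar variety `V(k) ⊆ 𝔸^{k+5}`: for `k ≥ 3` the quotient
`ℂ[x_0,…,x_k,a,b,c,z]/I(k)` is an integral domain of Krull dimension 5,
and likewise for the `k = 2` complete intersection.
-/

open MvPolynomial

noncomputable section

/-- The ambient polynomial ring `ℂ[x_0,…,x_k,a,b,c,z]`:
variables are `Sum.inl i` for `x_i` (`0 ≤ i ≤ k`) and `Sum.inr 0,1,2,3`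
for `a, b, c, z`. -/
abbrev Vk.R (k : ℕ) : Type := MvPolynomial (Fin (k + 1) ⊕ Fin 4) ℂ

namespace Vk

variable (k : ℕ)

/-- The variable `x_i` (for `i ≤ k`; junk value `0` out of range). -/
def xv (i : ℕ) : R k := if h : i ≤ k then X (Sum.inl ⟨i, by omega⟩) else 0

/-- The variable `a`. -/
def av : R k := X (Sum.inr 0)

/-- The variable `b`. -/
def bv : R k := X (Sum.inr 1)

/-- The variable `c`. -/
def cv : R k := X (Sum.inr 2)

/-- The variable `z`. -/
def zv : R k := X (Sum.inr 3)

/-- Entry of the `k × (k-2)` matrix `N`: `a` on the diagonal `r = s`,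
`b` for `r = s+1`, `c` for `r = s+2`, `0` otherwise. -/
def Nent (r s : ℕ) : R k :=
  if r = s then av k else if r = s + 1 then bv k else if r = s + 2 then cv k else 0

/-- The index (among `0,…,k-1`) of the `t`-th remaining row after deleting
rows `p` and `q` (where `p < q`). -/
def skip (p q t : ℕ) : ℕ := if t < p then t else if t < q - 1 then t + 1 else t + 2

/-- The `(k-2) × (k-2)` submatrix `N(p,q)` of `N` obtained by deleting rows
`p` and `q`. -/
def Nsub (p q : ℕ) : Matrix (Fin (k - 2)) (Fin (k - 2)) (R k) :=
  fun t s => Nent k (skip p q (t : ℕ)) (s : ℕ)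

/-- The generators of the ideal `I(k)`: the recurrence relations
`a x_{i-1} + b x_i + c x_{i+1}` for `1 ≤ i ≤ k-1` together with the Cramer
relations `x_p x_{q+1} - x_{p+1} x_q - (-1)^{q-p-1} z det N(p,q)` for
`0 ≤ p < q ≤ k-1`. -/
def Igen : Set (R k) :=
  { P | ∃ i : ℕ, 1 ≤ i ∧ i ≤ k - 1 ∧
      P = av k * xv k (i - 1) + bv k * xv k i + cv k * xv k (i + 1) } ∪
  { P | ∃ p q : ℕ, p < q ∧ q ≤ k - 1 ∧
      P = xv k p * xv k (q + 1) - xv k (p + 1) * xv k q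
          - (-1) ^ (q - p - 1) * zv k * (Nsub k p q).det }

/-- The ideal `I(k)` defining the polar variety `V(k)`. -/
def Ik : Ideal (R k) := Ideal.span (Igen k)

end Vk

namespace Vk

/-! ### The determinants of the submatrices `N(p,q)` -/

/-- The tridiagonal continuant: the determinant of the `n × n` tridiagonal matrix with `b` on the
diagonal and products `e` of opposite off-diagonal entries. -/
def cont {B : Type*} [CommRing B] (e b : B) : ℕ → B
  | 0 => 1
  | 1 => b
  | n + 2 => b * cont e b (n + 1) - e * cont e b n

/-- The entries of the matrix `N` over an arbitrary ring. -/
def ent {B : Type*} [CommRing B] (a b c : B) (r s : ℕ) : B :=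
  if r = s then a else if r = s + 1 then b else if r = s + 2 then c else 0

section Det

variable {B : Type*} [CommRing B] (a b c : B)

lemma ent_succ (r s : ℕ) : ent a b c (r + 1) (s + 1) = ent a b c r s := by
  simp [ent]

/-- The square matrix whose rows are the rows `row 0, row 1, …` of `N`. -/
def rowMat (row : ℕ → ℕ) (n : ℕ) : Matrix (Fin n) (Fin n) B :=
  fun t s => ent a b c (row t) s

lemma det_tridiag (n : ℕ) : (rowMat a b c (fun t => t + 1) n).det = cont (a * c) b n := by
  induction n using Nat.twoStepInduction with
  | zero => simp [cont]
  | one => simp [cont, rowMat, ent]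
  | more n ih0 ih1 =>
    have h0 : ((rowMat a b c (fun t => t + 1) (n + 2)).submatrix Fin.succ Fin.succ)
        = rowMat a b c (fun t => t + 1) (n + 1) := by
      ext i j
      simp [rowMat, ent_succ]
    -- the minor obtained by deleting row `0` and column `1` has first column `(c, 0, …, 0)`
    have h1 : ((rowMat a b c (fun t => t + 1) (n + 2)).submatrix Fin.succ
        (Fin.succAbove 1)).det = c * cont (a * c) b n := by
      rw [Matrix.det_succ_column_zero, Fin.sum_univ_succ, Finset.sum_eq_zero, ← ih0]
      · have : (((rowMat a b c (fun t => t + 1) (n + 2)).submatrix Fin.succ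
            (Fin.succAbove 1)).submatrix (Fin.succAbove 0) Fin.succ)
            = rowMat a b c (fun t => t + 1) n := by
          ext i j
          have : ((1 : Fin (n + 2)).succAbove j.succ : Fin (n+2)) = j.succ.succ := by
            rw [Fin.succAbove_of_le_castSucc]
            simp [Fin.le_def]
          simp [rowMat, this, ent_succ]
        rw [this]
        simp [rowMat, ent]
      · intro i _
        simp [rowMat, ent]
    rw [Matrix.det_succ_row_zero, Fin.sum_univ_succ, Fin.sum_univ_succ, Finset.sum_eq_zero,
      cont, ← ih1, ← h0]
    · have e : (Fin.succ 0 : Fin (n + 2)) = 1 := rfl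
      rw [e, h1]
      simp [rowMat, ent]
      ring
    · intro i _
      simp [rowMat, ent]

/-- Deleting rows `p < q` of `N` leaves a block triangular matrix whose blocks are lower triangular
with diagonal `a`, tridiagonal, and upper triangular with diagonal `c`. -/
lemma det_rowMat_skip (n : ℕ) : ∀ p q : ℕ, p < q → q ≤ n + 1 →
    (rowMat a b c (skip p q) n).det
      = a ^ p * cont (a * c) b (q - p - 1) * c ^ (n + 1 - q) := by
  induction n with
  | zero =>
    intro p q hpq hq
    obtain rfl : p = 0 := by omega
    obtain rfl : q = 1 := by omega
    simp [cont]
  | succ n ih =>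
    intro p q hpq hq
    rcases Nat.eq_zero_or_pos p with rfl | hp
    · rcases hq.lt_or_eq with hq' | rfl
      · rw [Matrix.det_succ_row _ (Fin.last n), Finset.sum_eq_single (Fin.last n)]
        · have : ((rowMat a b c (skip 0 q) (n + 1)).submatrix (Fin.last n).succAbove
              (Fin.last n).succAbove) = rowMat a b c (skip 0 q) n := by
            ext i j
            simp [rowMat]
          rw [this, ih 0 q hpq (by omega)]
          have h2 : skip 0 q n = n + 2 := by
            unfold skip
            rw [if_neg (by omega), if_neg (by omega)]
          have h3 : n + 1 + 1 - q = (n + 1 - q) + 1 := by omega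
          simp only [rowMat, Fin.val_last, h2, h3, ent]
          rw [← two_mul, pow_mul]
          simp
          ring
        · intro j _ hj
          have hj' : (j : ℕ) < n := Fin.val_lt_last hj
          have h2 : skip 0 q n = n + 2 := by
            unfold skip
            rw [if_neg (by omega), if_neg (by omega)]
          have : rowMat a b c (skip 0 q) (n + 1) (Fin.last n) j = 0 := by
            simp only [rowMat, Fin.val_last, h2, ent]
            rw [if_neg (by omega), if_neg (by omega), if_neg (by omega)]
          simp [this]
        · simp
      · have : rowMat a b c (skip 0 (n + 1 + 1)) (n + 1) = rowMat a b c (fun t => t + 1) (n + 1) := by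
          ext i j
          have := i.2
          simp only [rowMat, skip]
          rw [if_neg (by omega), if_pos (by omega)]
        rw [this, det_tridiag]
        simp
    · obtain ⟨p, rfl⟩ : ∃ p', p = p' + 1 := ⟨p - 1, by omega⟩
      obtain ⟨q, rfl⟩ : ∃ q', q = q' + 1 := ⟨q - 1, by omega⟩
      rw [Matrix.det_succ_row_zero, Finset.sum_eq_single 0]
      · have : ((rowMat a b c (skip (p + 1) (q + 1)) (n + 1)).submatrix Fin.succ
            (Fin.succAbove 0)) = rowMat a b c (skip p q) n := by
          ext i j
          have h : skip (p + 1) (q + 1) (i + 1) = skip p q i + 1 := by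
            unfold skip
            split_ifs <;> omega
          simp [rowMat, h, ent_succ]
        rw [this, ih p q (by omega) (by omega)]
        have h3 : n + 1 + 1 - (q + 1) = n + 1 - q := by omega
        have h4 : q + 1 - (p + 1) - 1 = q - p - 1 := by omega
        rw [h3, h4]
        simp [rowMat, skip, ent]
        ring
      · intro j _ hj
        have : (j : ℕ) ≠ 0 := fun h => hj (Fin.ext h)
        simp [rowMat, skip, ent, this.symm]
      · simp

end Det

lemma map_cont {B B' : Type*} [CommRing B] [CommRing B'] (f : B →+* B') (e b : B) (n : ℕ) :
    f (cont e b n) = cont (f e) (f b) n := by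
  induction n using Nat.twoStepInduction with
  | zero => simp [cont]
  | one => simp [cont]
  | more n ih0 ih1 => rw [cont, cont, map_sub, map_mul, map_mul, ih0, ih1]

lemma det_Nsub {k : ℕ} (hk : 2 ≤ k) {p q : ℕ} (hpq : p < q) (hq : q < k) :
    (Nsub k p q).det = av k ^ p * cont (av k * cv k) (bv k) (q - p - 1) * cv k ^ (k - 1 - q) := by
  have h : k - 1 - q = k - 2 + 1 - q := by omega
  rw [h, ← det_rowMat_skip _ _ _ (k - 2) p q hpq (by omega)]
  rfl

end Vk

namespace Vk

/-! ### The relations with the determinants evaluated -/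

section Relations

variable {k : ℕ}

/-- A homomorphism kills `I(k)` as soon as the images of the variables satisfy the recurrence and
Cramer relations, the latter with the determinants evaluated. -/
lemma Ik_le_ker (hk : 2 ≤ k) {B : Type*} [CommRing B] (h : R k →+* B)
    (h1 : ∀ i, i + 2 ≤ k →
      h (av k) * h (xv k i) + h (bv k) * h (xv k (i + 1)) + h (cv k) * h (xv k (i + 2)) = 0)
    (h2 : ∀ p q, p < q → q < k → h (xv k p) * h (xv k (q + 1)) - h (xv k (p + 1)) * h (xv k q)
      = (-1) ^ (q - p - 1) * h (zv k) * (h (av k) ^ p *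
        cont (h (av k) * h (cv k)) (h (bv k)) (q - p - 1) * h (cv k) ^ (k - 1 - q))) :
    Ik k ≤ RingHom.ker h := by
  rw [Ik, Ideal.span_le]
  rintro P (⟨i, hi1, hi2, rfl⟩ | ⟨p, q, hpq, hq, rfl⟩)
  · obtain ⟨i, rfl⟩ : ∃ j, i = j + 1 := ⟨i - 1, by omega⟩
    simpa [RingHom.mem_ker] using h1 i (by omega)
  · have := h2 p q hpq (by omega)
    simp only [SetLike.mem_coe, RingHom.mem_ker, det_Nsub hk hpq (show q < k by omega), map_sub,
      map_mul, map_pow, map_neg, map_one, map_cont]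
    rw [this, sub_self]

lemma recurrence_mem {i : ℕ} (hi : i + 2 ≤ k) :
    av k * xv k i + bv k * xv k (i + 1) + cv k * xv k (i + 2) ∈ Ik k :=
  Ideal.subset_span (Or.inl ⟨i + 1, by omega, by omega, by simp⟩)

lemma cramer_mem (hk : 2 ≤ k) {p q : ℕ} (hpq : p < q) (hq : q < k) :
    xv k p * xv k (q + 1) - xv k (p + 1) * xv k q - (-1) ^ (q - p - 1) * zv k *
      (av k ^ p * cont (av k * cv k) (bv k) (q - p - 1) * cv k ^ (k - 1 - q)) ∈ Ik k := by
  rw [← det_Nsub hk hpq hq]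
  exact Ideal.subset_span (Or.inr ⟨p, q, hpq, by omega, rfl⟩)

end Relations

/-! ### The irreducible quadric `a s² + b s t + c t²` -/

/-- The polynomial ring `ℂ[s,t,a,b,c]`, with its variables numbered in this order. -/
abbrev P5 : Type := MvPolynomial (Fin 5) ℂ

/-- The quadric `a s² + b s t + c t²`. -/
def quad : P5 := X 0 ^ 2 * X 2 + (X 3 * X 0 * X 1 + X 4 * X 1 ^ 2)

lemma prime_quad : Prime quad := by
  apply Irreducible.prime
  apply MvPolynomial.irreducible_mul_X_add
  · exact pow_ne_zero _ (X_ne_zero _)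
  · intro h
    have := MvPolynomial.vars_pow _ _ h
    simp [vars_X] at this
  · intro h
    have h4 := MvPolynomial.vars_add_subset _ _ h
    rw [Finset.mem_union] at h4
    rcases h4 with h4 | h4
    · have h5 := MvPolynomial.vars_mul _ _ h4
      rw [Finset.mem_union] at h5
      rcases h5 with h5 | h5
      · have h6 := MvPolynomial.vars_mul _ _ h5
        simp [vars_X] at h6
      · simp [vars_X] at h5
    · have h5 := MvPolynomial.vars_mul _ _ h4
      rw [Finset.mem_union] at h5
      rcases h5 with h5 | h5
      · simp [vars_X] at h5
      · have := MvPolynomial.vars_pow _ _ h5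
        simp [vars_X] at this
  · apply IsRelPrime.pow_left
    have hX : Irreducible (X 0 : P5) := (MvPolynomial.X_prime).irreducible
    rw [hX.isRelPrime_iff_not_dvd]
    rintro ⟨g, hg⟩
    -- at `s = 0`, `t = c = 1` the second coefficient does not vanish
    have := congrArg (MvPolynomial.eval (fun i : Fin 5 => if i = 0 then (0 : ℂ) else 1)) hg
    simp at this

/-- The coordinate ring of the quadric. -/
def S : Type := P5 ⧸ Ideal.span {quad}

instance : CommRing S := inferInstanceAs (CommRing (P5 ⧸ Ideal.span {quad}))

instance : Algebra ℂ S := inferInstanceAs (Algebra ℂ (P5 ⧸ Ideal.span {quad}))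

instance : IsDomain S := by
  have : (Ideal.span {quad}).IsPrime :=
    (Ideal.span_singleton_prime prime_quad.ne_zero).2 prime_quad
  exact Ideal.Quotient.isDomain (Ideal.span {quad})

/-- The quotient map `ℂ[s,t,a,b,c] → S`. -/
def mkS : P5 →ₐ[ℂ] S := Ideal.Quotient.mkₐ ℂ (Ideal.span {quad})

lemma mkS_eq_zero {f : P5} : mkS f = 0 ↔ quad ∣ f :=
  Ideal.Quotient.eq_zero_iff_mem.trans Ideal.mem_span_singleton

/-- The class in `S` of the `i`-th variable of `ℂ[s,t,a,b,c]`. -/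
def y (i : Fin 5) : S := mkS (X i)

lemma quad_rel : y 2 * y 0 ^ 2 + y 3 * y 0 * y 1 + y 4 * y 1 ^ 2 = 0 := by
  have h : mkS quad = 0 := mkS_eq_zero.2 dvd_rfl
  simp only [quad, map_add, map_mul, map_pow] at h
  simp only [y]
  linear_combination h

/-- Evaluation at the point `s = t = a = 1`, `b = 0`, `c = -1` of the quadric. -/
def evalPt : S →+* ℂ :=
  Ideal.Quotient.lift (Ideal.span {quad}) (MvPolynomial.eval ![1, 1, 1, 0, -1]) (by
    intro f hf
    obtain ⟨g, rfl⟩ := Ideal.mem_span_singleton.1 hf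
    simp [quad])

lemma evalPt_y (i : Fin 5) : evalPt (y i) = ![1, 1, 1, 0, -1] i := by
  exact (Ideal.Quotient.lift_mk _ _ _).trans (MvPolynomial.eval_X i)

lemma y_ne_zero {i : Fin 5} (hi : i ≠ 3) : y i ≠ 0 := by
  intro h
  have := congrArg evalPt h
  rw [evalPt_y] at this
  fin_cases i <;> simp at this hi

/-- The determinant `a s² - c t²` of the pair formed by the root `(s : t)` of the quadratic form
and the residual root `(c t : a s)`. -/
def disc : S := y 2 * y 0 ^ 2 - y 4 * y 1 ^ 2

lemma disc_ne_zero : disc ≠ 0 := by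
  intro h
  have := congrArg evalPt h
  simp only [disc, map_sub, map_mul, map_pow, evalPt_y] at this
  change (1 : ℂ) * 1 ^ 2 - (-1) * 1 ^ 2 = 0 at this
  norm_num at this

end Vk

namespace Vk

/-! ### The parametrization of `V(k)` by the two roots of the quadratic form -/

section Param

variable {B : Type*} [CommRing B]

/-- If `(s : t)` is a root of `a s² + b s t + c t²`, the continuants are, up to sign and powers of
`s t`, the complete homogeneous symmetric polynomials in `a s²` and `c t²`. -/
lemma cont_root {s t a b c : B} (h : a * s ^ 2 + b * s * t + c * t ^ 2 = 0) (n : ℕ) :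
    (s * t) ^ n * cont (a * c) b n * (a * s ^ 2 - c * t ^ 2)
      = (-1) ^ n * ((a * s ^ 2) ^ (n + 1) - (c * t ^ 2) ^ (n + 1)) := by
  induction n using Nat.twoStepInduction with
  | zero => simp [cont]
  | one =>
    simp only [cont]
    linear_combination (a * s ^ 2 - c * t ^ 2) * h
  | more n ih0 ih1 =>
    rw [cont]
    linear_combination (b * s * t) * ih1 - (a * c) * (s * t) ^ 2 * ih0
      + (-1) ^ (n + 1) * ((a * s ^ 2) ^ (n + 2) - (c * t ^ 2) ^ (n + 2)) * h

/-- The `i`-th term of the solution of the recurrence which is the geometric progression of the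
root `(s : t)` plus `v` times that of the residual root `(c t : a s)`. -/
def param (s t a c v : B) (k i : ℕ) : B :=
  s ^ (k - i) * t ^ i + v * ((c * t) ^ (k - i) * (a * s) ^ i)

lemma param_recurrence {s t a b c : B} (h : a * s ^ 2 + b * s * t + c * t ^ 2 = 0) (v : B)
    {k i : ℕ} (hi : i + 2 ≤ k) :
    a * param s t a c v k i + b * param s t a c v k (i + 1) + c * param s t a c v k (i + 2) = 0 := by
  obtain ⟨e, rfl⟩ := Nat.exists_eq_add_of_le hi
  have h0 : i + 2 + e - i = e + 2 := by omega
  have h1 : i + 2 + e - (i + 1) = e + 1 := by omega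
  have h2 : i + 2 + e - (i + 2) = e := by omega
  simp only [param, h0, h1, h2]
  linear_combination (s ^ e * t ^ i + v * (c * t) ^ e * (a * s) ^ i * (a * c)) * h

lemma param_cramer {s t a b c : B} (h : a * s ^ 2 + b * s * t + c * t ^ 2 = 0) (v : B)
    {k p q : ℕ} (hpq : p < q) (hq : q < k) :
    param s t a c v k p * param s t a c v k (q + 1) - param s t a c v k (p + 1) * param s t a c v k q
      = (-1) ^ (q - p - 1) * (v * ((a * s ^ 2 - c * t ^ 2) ^ 2 * (s * t) ^ (k - 2))) *
        (a ^ p * cont (a * c) b (q - p - 1) * c ^ (k - 1 - q)) := by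
  obtain ⟨n, rfl⟩ := Nat.exists_eq_add_of_le (Nat.succ_le_of_lt hpq)
  obtain ⟨e, rfl⟩ := Nat.exists_eq_add_of_le (Nat.succ_le_of_lt hq)
  have h0 : (p.succ + n).succ + e - p = e + n + 2 := by omega
  have h1 : (p.succ + n).succ + e - (p + 1) = e + n + 1 := by omega
  have h2 : (p.succ + n).succ + e - (p.succ + n) = e + 1 := by omega
  have h3 : (p.succ + n).succ + e - (p.succ + n + 1) = e := by omega
  have h4 : p.succ + n - p - 1 = n := by omega
  have h5 : (p.succ + n).succ + e - 2 = p + n + e := by omega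
  have h6 : (p.succ + n).succ + e - 1 - (p.succ + n) = e := by omega
  have h7 : p.succ + n = p + n + 1 := by omega
  simp only [param, h0, h1, h2, h3, h4, h5, h6]
  rw [h7]
  have hsq : ((-1 : B) ^ n) * (-1) ^ n = 1 := by
    rw [← mul_pow]; simp
  have key := cont_root h n
  linear_combination (-(-1 : B) ^ n * v * (a * s ^ 2 - c * t ^ 2) * (s * t) ^ (p + e) * a ^ p * c ^ e)
    * key - v * (a * s ^ 2 - c * t ^ 2) * (s * t) ^ (p + e) * a ^ p * c ^ e *
      ((a * s ^ 2) ^ (n + 1) - (c * t ^ 2) ^ (n + 1)) * hsq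

end Param

section Phi

variable (k : ℕ)

lemma xv_of_le {k i : ℕ} (hi : i ≤ k) : xv k i = X (Sum.inl ⟨i, by omega⟩) := by
  simp [xv, hi]

/-- The parametrization `ℂ[x,a,b,c,z] → S[v]`: the second root is weighted by the variable `v`. -/
def phiR : R k →ₐ[ℂ] Polynomial S :=
  aeval (Sum.elim
    (fun i : Fin (k + 1) => param (Polynomial.C (y 0)) (Polynomial.C (y 1)) (Polynomial.C (y 2))
      (Polynomial.C (y 4)) Polynomial.X k i)
    ![Polynomial.C (y 2), Polynomial.C (y 3), Polynomial.C (y 4),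
      Polynomial.X * Polynomial.C (disc ^ 2 * (y 0 * y 1) ^ (k - 2))])

lemma phiR_x {i : ℕ} (hi : i ≤ k) : phiR k (xv k i) =
    param (Polynomial.C (y 0)) (Polynomial.C (y 1)) (Polynomial.C (y 2))
      (Polynomial.C (y 4)) Polynomial.X k i := by
  simp [phiR, xv_of_le hi]

lemma phiR_a : phiR k (av k) = Polynomial.C (y 2) := by simp [phiR, av]

lemma phiR_b : phiR k (bv k) = Polynomial.C (y 3) := by simp [phiR, bv]

lemma phiR_c : phiR k (cv k) = Polynomial.C (y 4) := by simp [phiR, cv]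

lemma phiR_z : phiR k (zv k) =
    Polynomial.X * Polynomial.C (disc ^ 2 * (y 0 * y 1) ^ (k - 2)) := by simp [phiR, zv]

lemma quad_rel_C : Polynomial.C (y 2) * Polynomial.C (y 0) ^ 2 +
    Polynomial.C (y 3) * Polynomial.C (y 0) * Polynomial.C (y 1) +
    Polynomial.C (y 4) * Polynomial.C (y 1) ^ 2 = 0 := by
  simp only [← map_pow, ← map_mul, ← map_add, quad_rel, map_zero]

lemma Ik_le_ker_phiR {k : ℕ} (hk : 2 ≤ k) : Ik k ≤ RingHom.ker (phiR k : R k →+* Polynomial S) := by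
  refine Ik_le_ker hk (phiR k : R k →+* Polynomial S) ?_ ?_
  · intro i hi
    simp only [RingHom.coe_coe]
    rw [phiR_x k (by omega), phiR_x k (by omega), phiR_x k (by omega), phiR_a, phiR_b, phiR_c]
    exact param_recurrence quad_rel_C _ hi
  · intro p q hpq hq
    simp only [RingHom.coe_coe]
    rw [phiR_x k (by omega), phiR_x k (by omega), phiR_x k (by omega), phiR_x k (by omega),
      phiR_a, phiR_b, phiR_c, phiR_z, param_cramer quad_rel_C _ hpq hq]
    simp only [disc, map_mul, map_pow, map_sub]

end Phi

end Vk

namespace Vk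

/-! ### The fibre `z = 0`: forms of degree divisible by `k` modulo the quadric -/

section Toric

variable {W : Type*} [CommRing W] (k : ℕ) (x : ℕ → W)

/-- The greedy monomial of degree `d` and weight `w` in `x_0, …, x_k`: it plays the role of
`s^(dk - w) t^w`. -/
def gm : ℕ → ℕ → W
  | 0, _ => 1
  | d + 1, w => x (min w k) * gm d (w - k)

variable {k x}

lemma mul_eq_low (hx : ∀ p q, p < k → q < k → x p * x (q + 1) = x (p + 1) * x q) :
    ∀ w j, w + j ≤ k → x w * x j = x 0 * x (w + j) := by
  intro w
  induction w with
  | zero => intro j _; simp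
  | succ w ih =>
    intro j hj
    rw [← hx w j (by omega) (by omega), ih (j + 1) (by omega)]
    congr 2
    omega

lemma mul_eq_high (hx : ∀ p q, p < k → q < k → x p * x (q + 1) = x (p + 1) * x q) :
    ∀ e w j, w + e = k → j ≤ k → k ≤ w + j → x w * x j = x k * x (w + j - k) := by
  intro e
  induction e with
  | zero =>
    intro w j hw hj hwj
    obtain rfl : w = k := by omega
    simp
  | succ e ih =>
    intro w j hw hj hwj
    obtain ⟨j, rfl⟩ : ∃ j', j = j' + 1 := ⟨j - 1, by omega⟩
    rw [hx w j (by omega) (by omega), ih (w + 1) j (by omega) (by omega) (by omega)]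
    congr 2
    omega

/-- The relations of the rational normal curve reduce every monomial in the `x_i` to the greedy
one of the same degree and weight. -/
lemma gm_mul (hx : ∀ p q, p < k → q < k → x p * x (q + 1) = x (p + 1) * x q) :
    ∀ d w j, w ≤ d * k → j ≤ k → gm k x d w * x j = gm k x (d + 1) (w + j) := by
  intro d
  induction d with
  | zero =>
    intro w j hw hj
    obtain rfl : w = 0 := by omega
    simp [gm, hj]
  | succ d ih =>
    intro w j hw hj
    rw [add_mul, one_mul] at hw
    rw [gm, gm]
    rcases le_or_gt w k with hwk | hwk
    · have h0 : w - k = 0 := by omega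
      rw [min_eq_left hwk, h0]
      rcases le_or_gt (w + j) k with h | h
      · have h1 : w + j - k = 0 := by omega
        rw [min_eq_left h, h1, gm]
        simp only [Nat.zero_min, Nat.zero_sub]
        linear_combination gm k x d 0 * mul_eq_low hx w j h
      · have h2 : w + j - k - k = 0 := by omega
        rw [min_eq_right h.le, gm, h2, min_eq_left (by omega)]
        linear_combination gm k x d 0 * mul_eq_high hx (k - w) w j (by omega) hj h.le
    · have h3 : w + j - k = w - k + j := by omega
      rw [min_eq_right hwk.le, min_eq_right (by omega), h3, ← ih (w - k) j (by omega) hj]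
      ring

lemma gm_recurrence (hk : 2 ≤ k)
    (hx : ∀ p q, p < k → q < k → x p * x (q + 1) = x (p + 1) * x q) {a b c : W}
    (hr : ∀ i, i + 2 ≤ k → a * x i + b * x (i + 1) + c * x (i + 2) = 0)
    {d w : ℕ} (hw : w + 2 ≤ (d + 1) * k) :
    a * gm k x (d + 1) w + b * gm k x (d + 1) (w + 1) + c * gm k x (d + 1) (w + 2) = 0 := by
  rw [add_mul, one_mul] at hw
  obtain ⟨e, i, rfl, he, hi⟩ : ∃ e i, w = e + i ∧ e ≤ d * k ∧ i + 2 ≤ k := by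
    rcases le_or_gt w (k - 2) with h | h
    · exact ⟨0, w, by omega, by omega, by omega⟩
    · exact ⟨w - (k - 2), k - 2, by omega, by omega, by omega⟩
  rw [add_assoc e i 1, add_assoc e i 2, ← gm_mul hx d e i he (by omega),
    ← gm_mul hx d e (i + 1) he (by omega), ← gm_mul hx d e (i + 2) he hi]
  linear_combination gm k x d e * hr i hi

variable [Algebra ℂ W]

variable (k x) in
/-- The linear map `ℂ[s,t,a,b,c] → W` sending `s^(dk - w) t^w` to the greedy monomial of degree `d`
and weight `w`, linear in `a, b, c`, and killing the monomials whose degree in `s, t` is not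
divisible by `k`. -/
def sec (a b c : W) : P5 →ₗ[ℂ] W :=
  (MvPolynomial.basisMonomials (Fin 5) ℂ).constr ℂ fun m =>
    if k ∣ m 0 + m 1 then gm k x ((m 0 + m 1) / k) (m 1) * (a ^ m 2 * b ^ m 3 * c ^ m 4) else 0

lemma sec_monomial (a b c : W) (m : Fin 5 →₀ ℕ) : sec k x a b c (monomial m 1) =
    if k ∣ m 0 + m 1 then gm k x ((m 0 + m 1) / k) (m 1) * (a ^ m 2 * b ^ m 3 * c ^ m 4) else 0 := by
  have : (monomial m 1 : P5) = MvPolynomial.basisMonomials (Fin 5) ℂ m := by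
    rw [MvPolynomial.coe_basisMonomials]
  rw [this, sec, Module.Basis.constr_basis]

lemma lin_ext {f g : P5 →ₗ[ℂ] W} (h : ∀ m, f (monomial m 1) = g (monomial m 1)) (p : P5) :
    f p = g p := by
  have : f = g := (MvPolynomial.basisMonomials (Fin 5) ℂ).ext fun m => by
    simpa [MvPolynomial.coe_basisMonomials] using h m
  rw [this]

lemma monomial_mul_vars (m : Fin 5 →₀ ℕ) (e : Fin 5 → ℕ) :
    (monomial m 1 : P5) * (X 0 ^ e 0 * X 1 ^ e 1 * X 2 ^ e 2 * X 3 ^ e 3 * X 4 ^ e 4)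
      = monomial (m + Finsupp.equivFunOnFinite.symm e) 1 := by
  have : (X 0 ^ e 0 * X 1 ^ e 1 * X 2 ^ e 2 * X 3 ^ e 3 * X 4 ^ e 4 : P5)
      = monomial (Finsupp.equivFunOnFinite.symm e) 1 := by
    rw [monomial_eq, Finsupp.prod_fintype _ _ (by simp)]
    simp [Fin.prod_univ_five]
  rw [this, monomial_mul, one_mul]

lemma sec_monomial_mul (a b c : W) (m : Fin 5 →₀ ℕ) (e0 e1 e2 e3 e4 : ℕ) :
    sec k x a b c (monomial m 1 * (X 0 ^ e0 * X 1 ^ e1 * X 2 ^ e2 * X 3 ^ e3 * X 4 ^ e4)) =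
    if k ∣ m 0 + e0 + (m 1 + e1) then gm k x ((m 0 + e0 + (m 1 + e1)) / k) (m 1 + e1) *
      (a ^ (m 2 + e2) * b ^ (m 3 + e3) * c ^ (m 4 + e4)) else 0 := by
  have := monomial_mul_vars m ![e0, e1, e2, e3, e4]
  change monomial m 1 * (X 0 ^ e0 * X 1 ^ e1 * X 2 ^ e2 * X 3 ^ e3 * X 4 ^ e4) = _ at this
  rw [this, sec_monomial]
  rfl

/-- The recurrence relations make `sec` vanish on the multiples of the quadric. -/
lemma sec_quad_mul (hk : 2 ≤ k)
    (hx : ∀ p q, p < k → q < k → x p * x (q + 1) = x (p + 1) * x q) {a b c : W}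
    (hr : ∀ i, i + 2 ≤ k → a * x i + b * x (i + 1) + c * x (i + 2) = 0) (g : P5) :
    sec k x a b c (g * quad) = 0 := by
  refine lin_ext (f := sec k x a b c ∘ₗ LinearMap.mulRight ℂ quad) (g := 0) (fun m => ?_) g
  have e : (monomial m 1 : P5) * quad =
      monomial m 1 * (X 0 ^ 2 * X 1 ^ 0 * X 2 ^ 1 * X 3 ^ 0 * X 4 ^ 0) +
      (monomial m 1 * (X 0 ^ 1 * X 1 ^ 1 * X 2 ^ 0 * X 3 ^ 1 * X 4 ^ 0) +
      monomial m 1 * (X 0 ^ 0 * X 1 ^ 2 * X 2 ^ 0 * X 3 ^ 0 * X 4 ^ 1)) := by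
    simp only [quad]
    ring
  simp only [LinearMap.comp_apply, LinearMap.mulRight_apply, LinearMap.zero_apply]
  rw [e, map_add, map_add, sec_monomial_mul, sec_monomial_mul, sec_monomial_mul]
  have h1 : m 0 + 2 + (m 1 + 0) = m 0 + m 1 + 2 := by omega
  have h2 : m 0 + 1 + (m 1 + 1) = m 0 + m 1 + 2 := by omega
  have h3 : m 0 + 0 + (m 1 + 2) = m 0 + m 1 + 2 := by omega
  rw [h1, h2, h3]
  split_ifs with hd
  · obtain ⟨d, hd⟩ := hd
    rw [hd, Nat.mul_div_cancel_left _ (by omega)]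
    obtain ⟨d, rfl⟩ : ∃ d', d = d' + 1 := by
      refine ⟨d - 1, ?_⟩
      rcases d with _ | d
      · omega
      · rfl
    have := gm_recurrence hk hx hr (d := d) (w := m 1) (by rw [mul_comm]; omega)
    linear_combination (a ^ m 2 * b ^ m 3 * c ^ m 4) * this
  · simp

lemma sec_mul_abc (a b c : W) (e2 e3 e4 : ℕ) (g : P5) :
    sec k x a b c (g * (X 2 ^ e2 * X 3 ^ e3 * X 4 ^ e4))
      = sec k x a b c g * (a ^ e2 * b ^ e3 * c ^ e4) := by
  suffices H : ∀ m, _ = _ by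
    simpa only [LinearMap.comp_apply, LinearMap.mulRight_apply] using
      lin_ext (f := sec k x a b c ∘ₗ LinearMap.mulRight ℂ (X 2 ^ e2 * X 3 ^ e3 * X 4 ^ e4))
        (g := LinearMap.mulRight ℂ (a ^ e2 * b ^ e3 * c ^ e4) ∘ₗ sec k x a b c) H g
  intro m
  have := sec_monomial_mul (k := k) (x := x) a b c m 0 0 e2 e3 e4
  simp only [pow_zero, one_mul] at this
  simp only [LinearMap.comp_apply, LinearMap.mulRight_apply]
  rw [this, sec_monomial]
  simp only [add_zero, ite_mul, zero_mul]
  congr 1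
  ring

lemma sec_mul_x (hk : 2 ≤ k)
    (hx : ∀ p q, p < k → q < k → x p * x (q + 1) = x (p + 1) * x q) (a b c : W)
    {j : ℕ} (hj : j ≤ k) (g : P5) :
    sec k x a b c (g * (X 0 ^ (k - j) * X 1 ^ j)) = sec k x a b c g * x j := by
  suffices H : ∀ m, _ = _ by
    simpa only [LinearMap.comp_apply, LinearMap.mulRight_apply] using
      lin_ext (f := sec k x a b c ∘ₗ LinearMap.mulRight ℂ (X 0 ^ (k - j) * X 1 ^ j))
        (g := LinearMap.mulRight ℂ (x j) ∘ₗ sec k x a b c) H g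
  intro m
  have := sec_monomial_mul (k := k) (x := x) a b c m (k - j) j 0 0 0
  simp only [pow_zero, mul_one] at this
  simp only [LinearMap.comp_apply, LinearMap.mulRight_apply]
  rw [this, sec_monomial]
  have h1 : m 0 + (k - j) + (m 1 + j) = m 0 + m 1 + k := by omega
  simp only [h1, Nat.dvd_add_self_right]
  rw [Nat.add_div_right _ (by omega)]
  split_ifs with hd
  · have hw : m 1 ≤ (m 0 + m 1) / k * k := by
      rw [Nat.div_mul_cancel hd]
      omega
    rw [← gm_mul hx _ _ _ hw hj]
    simp only [add_zero]
    ring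
  · simp

variable (k) in
/-- The map `x_i ↦ s^(k-i) t^i`, `z ↦ 0`, describing the fibre `z = 0`. -/
def psi : R k →ₐ[ℂ] P5 :=
  aeval (Sum.elim (fun i : Fin (k + 1) => X 0 ^ (k - (i : ℕ)) * X 1 ^ (i : ℕ)) ![X 2, X 3, X 4, 0])

/-- Modulo `z`, the Cramer and recurrence relations generate all relations between the
`s^(k-i) t^i, a, b, c` modulo the quadric. -/
lemma eq_zero_of_quad_dvd (hk : 2 ≤ k) (π : R k →ₐ[ℂ] W) (hz : π (zv k) = 0)
    (hx : ∀ p q, p < k → q < k → π (xv k p) * π (xv k (q + 1)) = π (xv k (p + 1)) * π (xv k q))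
    (hr : ∀ i, i + 2 ≤ k → π (av k) * π (xv k i) + π (bv k) * π (xv k (i + 1))
      + π (cv k) * π (xv k (i + 2)) = 0)
    {f : R k} (hf : quad ∣ psi k f) : π f = 0 := by
  have key : ∀ f : R k, sec k (fun i => π (xv k i)) (π (av k)) (π (bv k)) (π (cv k)) (psi k f)
      = π f := by
    intro f
    induction f using MvPolynomial.induction_on with
    | C r =>
      have h1 : psi k (C r) = r • monomial 0 1 := by
        rw [← MvPolynomial.algebraMap_eq, AlgHom.commutes, Algebra.algebraMap_eq_smul_one]
        rfl
      rw [h1, map_smul, sec_monomial, ← MvPolynomial.algebraMap_eq, AlgHom.commutes,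
        Algebra.algebraMap_eq_smul_one]
      simp [gm]
    | add p q hp hq => rw [map_add, map_add, hp, hq, map_add]
    | mul_X p n hp =>
      rw [map_mul (psi k), map_mul π, ← hp]
      rcases n with i | n
      · have h1 : psi k (X (Sum.inl i)) = X 0 ^ (k - (i : ℕ)) * X 1 ^ (i : ℕ) := by simp [psi]
        have h2 : (X (Sum.inl i) : R k) = xv k i := (xv_of_le (by omega)).symm
        rw [h1, sec_mul_x hk hx _ _ _ (by omega), h2]
      · fin_cases n
        · have := sec_mul_abc (k := k) (x := fun i => π (xv k i)) (π (av k)) (π (bv k)) (π (cv k))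
            1 0 0 (psi k p)
          simp only [pow_zero, pow_one, mul_one] at this
          simpa [psi, av] using this
        · have := sec_mul_abc (k := k) (x := fun i => π (xv k i)) (π (av k)) (π (bv k)) (π (cv k))
            0 1 0 (psi k p)
          simp only [pow_zero, pow_one, mul_one, one_mul] at this
          simpa [psi, bv] using this
        · have := sec_mul_abc (k := k) (x := fun i => π (xv k i)) (π (av k)) (π (bv k)) (π (cv k))
            0 0 1 (psi k p)
          simp only [pow_zero, pow_one, one_mul] at this
          simpa [psi, cv] using this
        · have h2 : π (X (Sum.inr 3)) = 0 := hz
          simp [psi, h2]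
  obtain ⟨g, hg⟩ := hf
  rw [← key f, hg, mul_comm]
  exact sec_quad_mul hk hx hr g

end Toric

end Vk

namespace Vk

/-! ### Integrality -/

/-- Let `φ : A → D` be a homomorphism to a domain whose kernel is contained in `zA` while
`φ z ≠ 0`. Then elements of the kernel are infinitely divisible by `z`, and a grading of `A` in
which `z` has positive degree, encoded by `θ : A → A[T]`, forces them to vanish. -/
lemma injective_of_grading {A D : Type*} [CommRing A] [CommRing D] [IsDomain D] (z : A)
    (φ : A →+* D) (hz : φ z ≠ 0) (hker : ∀ f, φ f = 0 → z ∣ f)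
    (θ : A →+* Polynomial A) (hθz : Polynomial.X ∣ θ z)
    (hθ : ∀ f, Polynomial.eval 1 (θ f) = f) : Function.Injective φ := by
  rw [injective_iff_map_eq_zero]
  have hpow : ∀ (n : ℕ) (f : A), φ f = 0 → z ^ n ∣ f := by
    intro n
    induction n with
    | zero => simp
    | succ n ih =>
      intro f hf
      obtain ⟨g, rfl⟩ := hker f hf
      rw [map_mul, mul_eq_zero, or_iff_right hz] at hf
      rw [pow_succ']
      exact mul_dvd_mul_left _ (ih g hf)
  intro f hf
  rw [← hθ f]
  have : θ f = 0 := by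
    ext n
    have h1 : Polynomial.X ^ (n + 1) ∣ θ f := by
      refine (pow_dvd_pow_of_dvd hθz _).trans ?_
      rw [← map_pow]
      exact map_dvd θ (hpow _ f hf)
    rw [Polynomial.X_pow_dvd_iff] at h1
    simpa using h1 n (by omega)
  rw [this, Polynomial.eval_zero]

variable (k : ℕ)

/-- The coordinate ring of `V(k)`. -/
def A : Type := R k ⧸ Ik k

instance : CommRing (A k) := inferInstanceAs (CommRing (R k ⧸ Ik k))

instance : Algebra ℂ (A k) := inferInstanceAs (Algebra ℂ (R k ⧸ Ik k))

/-- The quotient map onto the coordinate ring of `V(k)`. -/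
def mkA : R k →ₐ[ℂ] A k := Ideal.Quotient.mkₐ ℂ (Ik k)

variable {k}

lemma mkA_surjective : Function.Surjective (mkA k) := Ideal.Quotient.mk_surjective

lemma mkA_eq_zero {f : R k} : mkA k f = 0 ↔ f ∈ Ik k := Ideal.Quotient.eq_zero_iff_mem

/-- The homomorphism on the coordinate ring of `V(k)` induced by one killing `I(k)`. -/
def liftA {B : Type*} [CommRing B] (h : R k →+* B) (hh : Ik k ≤ RingHom.ker h) : A k →+* B :=
  Ideal.Quotient.lift (Ik k) h hh

lemma liftA_mk {B : Type*} [CommRing B] (h : R k →+* B) (hh : Ik k ≤ RingHom.ker h) (f : R k) :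
    liftA h hh (mkA k f) = h f := Ideal.Quotient.lift_mk _ _ _

lemma recurrence_A {i : ℕ} (hi : i + 2 ≤ k) :
    mkA k (av k) * mkA k (xv k i) + mkA k (bv k) * mkA k (xv k (i + 1))
      + mkA k (cv k) * mkA k (xv k (i + 2)) = 0 := by
  simp only [← map_mul, ← map_add]
  exact mkA_eq_zero.2 (recurrence_mem hi)

lemma cramer_A (hk : 2 ≤ k) {p q : ℕ} (hpq : p < q) (hq : q < k) :
    mkA k (xv k p) * mkA k (xv k (q + 1)) - mkA k (xv k (p + 1)) * mkA k (xv k q)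
      = (-1) ^ (q - p - 1) * mkA k (zv k) * (mkA k (av k) ^ p *
        cont (mkA k (av k) * mkA k (cv k)) (mkA k (bv k)) (q - p - 1)
          * mkA k (cv k) ^ (k - 1 - q)) := by
  have h := mkA_eq_zero.2 (cramer_mem hk hpq hq)
  have hc := map_cont (mkA k : R k →+* A k) (av k * cv k) (bv k) (q - p - 1)
  simp only [RingHom.coe_coe] at hc
  simp only [map_sub, map_mul, map_pow, map_neg, map_one, hc] at h
  exact sub_eq_zero.1 h

/-- Setting the weight `v` of the second root to `0` gives the parametrization of the fibre
`z = 0`. -/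
lemma eval_phiR (f : R k) : Polynomial.eval 0 (phiR k f) = mkS (psi k f) := by
  have : ((Polynomial.aeval (0 : S)).restrictScalars ℂ).comp (phiR k) = mkS.comp (psi k) := by
    apply MvPolynomial.algHom_ext
    rintro (i | i)
    · simp [phiR, psi, param, y]
    · fin_cases i <;> simp [phiR, psi, y]
  simpa [Polynomial.aeval_def] using DFunLike.congr_fun this f

/-- The kernel of `A k → S`, `x_i ↦ s^(k-i) t^i`, `z ↦ 0`, is generated by `z`. -/
lemma z_dvd_of_psi (hk : 2 ≤ k) {f : R k} (hf : quad ∣ psi k f) : mkA k (zv k) ∣ mkA k f := by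
  set J : Ideal (A k) := Ideal.span {mkA k (zv k)} with hJ
  have hz : Ideal.Quotient.mk J (mkA k (zv k)) = 0 :=
    Ideal.Quotient.eq_zero_iff_mem.2 (Ideal.mem_span_singleton_self _)
  have hlt : ∀ p q, p < q → q < k → Ideal.Quotient.mk J (mkA k (xv k p) * mkA k (xv k (q + 1)))
      = Ideal.Quotient.mk J (mkA k (xv k (p + 1)) * mkA k (xv k q)) := by
    intro p q hpq hq
    rw [← sub_eq_zero, ← map_sub, cramer_A hk hpq hq, map_mul, map_mul, hz]
    simp
  have h0 := eq_zero_of_quad_dvd hk ((Ideal.Quotient.mkₐ ℂ J).comp (mkA k)) hz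
    (by
      intro p q hp hq
      simp only [AlgHom.comp_apply, Ideal.Quotient.mkₐ_eq_mk, ← map_mul (Ideal.Quotient.mk J)]
      rcases lt_trichotomy p q with h | rfl | h
      · exact hlt p q h hq
      · rw [mul_comm]
      · rw [mul_comm, ← hlt q p h hp, mul_comm])
    (by
      intro i hi
      simp only [AlgHom.comp_apply, Ideal.Quotient.mkₐ_eq_mk, ← map_mul (Ideal.Quotient.mk J),
        ← map_add (Ideal.Quotient.mk J)]
      rw [recurrence_A hi, map_zero]) hf
  exact Ideal.mem_span_singleton.1 (Ideal.Quotient.eq_zero_iff_mem.1 h0)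

variable (k) in
/-- The grading of `A k` in which the `x_i` have degree `1`, `z` has degree `2` and `a, b, c` have
degree `0`, before passing to the quotient by `I(k)`. -/
def thetaR : R k →ₐ[ℂ] Polynomial (A k) :=
  aeval (Sum.elim
    (fun i : Fin (k + 1) => Polynomial.X * Polynomial.C (mkA k (xv k i)))
    ![Polynomial.C (mkA k (av k)), Polynomial.C (mkA k (bv k)), Polynomial.C (mkA k (cv k)),
      Polynomial.X ^ 2 * Polynomial.C (mkA k (zv k))])

lemma thetaR_x {i : ℕ} (hi : i ≤ k) :
    thetaR k (xv k i) = Polynomial.X * Polynomial.C (mkA k (xv k i)) := by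
  rw [xv_of_le hi]
  simp [thetaR, xv_of_le hi]

lemma thetaR_a : thetaR k (av k) = Polynomial.C (mkA k (av k)) := by simp [thetaR, av]

lemma thetaR_b : thetaR k (bv k) = Polynomial.C (mkA k (bv k)) := by simp [thetaR, bv]

lemma thetaR_c : thetaR k (cv k) = Polynomial.C (mkA k (cv k)) := by simp [thetaR, cv]

lemma thetaR_z : thetaR k (zv k) = Polynomial.X ^ 2 * Polynomial.C (mkA k (zv k)) := by
  simp [thetaR, zv]

lemma Ik_le_ker_thetaR (hk : 2 ≤ k) :
    Ik k ≤ RingHom.ker (thetaR k : R k →+* Polynomial (A k)) := by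
  refine Ik_le_ker hk (thetaR k : R k →+* Polynomial (A k)) ?_ ?_
  · intro i hi
    simp only [RingHom.coe_coe]
    rw [thetaR_x (by omega), thetaR_x (by omega), thetaR_x (by omega), thetaR_a, thetaR_b, thetaR_c]
    have := congrArg Polynomial.C (recurrence_A hi)
    simp only [map_add, map_mul, map_zero] at this
    linear_combination Polynomial.X * this
  · intro p q hpq hq
    simp only [RingHom.coe_coe]
    rw [thetaR_x (by omega), thetaR_x (by omega), thetaR_x (by omega), thetaR_x (by omega),
      thetaR_a, thetaR_b, thetaR_c, thetaR_z]
    have := congrArg Polynomial.C (cramer_A hk hpq hq)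
    simp only [map_sub, map_mul, map_pow, map_neg, map_one, map_cont] at this
    linear_combination Polynomial.X ^ 2 * this

lemma eval_thetaR (f : R k) : Polynomial.eval 1 (thetaR k f) = mkA k f := by
  have : ((Polynomial.aeval (1 : A k)).restrictScalars ℂ).comp (thetaR k) = mkA k := by
    apply MvPolynomial.algHom_ext
    rintro (i | i)
    · have h : (X (Sum.inl i) : R k) = xv k i := (xv_of_le (by omega)).symm
      rw [AlgHom.comp_apply, h, thetaR_x (by omega)]
      simp
    · fin_cases i <;> simp [thetaR, av, bv, cv, zv]
  simpa [Polynomial.aeval_def] using DFunLike.congr_fun this f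

/-- The parametrization `A k → S[v]`. -/
def phiA (hk : 2 ≤ k) : A k →+* Polynomial S :=
  liftA (phiR k : R k →+* Polynomial S) (Ik_le_ker_phiR hk)

lemma phiA_mk (hk : 2 ≤ k) (f : R k) : phiA hk (mkA k f) = phiR k f := liftA_mk _ _ _

lemma phiA_z_ne_zero (hk : 2 ≤ k) : phiA hk (mkA k (zv k)) ≠ 0 := by
  rw [phiA_mk, phiR_z]
  refine mul_ne_zero Polynomial.X_ne_zero (Polynomial.C_ne_zero.2 (mul_ne_zero
    (pow_ne_zero _ disc_ne_zero) (pow_ne_zero _ (mul_ne_zero (y_ne_zero ?_) (y_ne_zero ?_))))) <;>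
  decide

lemma phiA_injective (hk : 2 ≤ k) : Function.Injective (phiA hk) := by
  refine injective_of_grading (mkA k (zv k)) (phiA hk) (phiA_z_ne_zero hk) ?_
    (liftA (thetaR k : R k →+* Polynomial (A k)) (Ik_le_ker_thetaR hk)) ?_ ?_
  · intro f hf
    obtain ⟨f, rfl⟩ := mkA_surjective f
    apply z_dvd_of_psi hk
    rw [← mkS_eq_zero, ← eval_phiR, ← phiA_mk hk, hf, Polynomial.eval_zero]
  · rw [liftA_mk, RingHom.coe_coe, thetaR_z, pow_two, mul_assoc]
    exact dvd_mul_right _ _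
  · intro f
    obtain ⟨f, rfl⟩ := mkA_surjective f
    rw [liftA_mk, RingHom.coe_coe, eval_thetaR]

lemma isDomain_A (hk : 2 ≤ k) : IsDomain (A k) := (phiA_injective hk).isDomain (phiA hk)

end Vk

namespace Vk

/-! ### Dimension -/

/-- By Noether normalization and incomparability, the dimension of a finitely generated domain over
a field is at most its transcendence degree. -/
lemma ringKrullDim_le_of_trdeg_le {K B : Type} [Field K] [CommRing B] [IsDomain B] [Algebra K B]
    [Algebra.FiniteType K B] {n : ℕ} (h : Algebra.trdeg K B ≤ n) : ringKrullDim B ≤ n := by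
  obtain ⟨s, g, hinj, hint⟩ := exists_integral_inj_algHom_of_fg K B
  have hs : s ≤ n := by
    have hi : AlgebraicIndependent K (fun i => g (X i)) := by
      have : aeval (fun i => g (X i)) = g := by
        ext i
        simp
      rw [AlgebraicIndependent, this]
      exact hinj
    have := hi.cardinalMk_le_trdeg.trans h
    simpa using this
  let _ : Algebra (MvPolynomial (Fin s) K) B := g.toRingHom.toAlgebra
  have : Algebra.IsIntegral (MvPolynomial (Fin s) K) B := ⟨hint⟩
  have h1 : ringKrullDim B ≤ ringKrullDim (MvPolynomial (Fin s) K) := by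
    refine Order.krullDim_le_of_strictMono
      (PrimeSpectrum.comap (algebraMap (MvPolynomial (Fin s) K) B)) ?_
    intro p q hpq
    exact Ideal.IsIntegral.comap_lt_comap (R := MvPolynomial (Fin s) K) hpq
  refine h1.trans ?_
  rw [MvPolynomial.ringKrullDim_of_isNoetherianRing, ringKrullDim_eq_zero_of_field]
  simpa using hs

variable {k : ℕ}

instance : Algebra.FiniteType ℂ (A k) :=
  Algebra.FiniteType.of_surjective (mkA k) mkA_surjective

lemma mkA_c_ne_zero (hk : 2 ≤ k) : mkA k (cv k) ≠ 0 := by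
  intro h
  have := congrArg (phiA hk) h
  rw [phiA_mk, phiR_c, map_zero, Polynomial.C_eq_zero] at this
  exact y_ne_zero (by decide) this

/-- Away from `c = 0`, the recurrence determines `x_2, …, x_k`, and a Cramer relation determines
`z`, from `x_0, x_1, a, b, c`. -/
lemma trdeg_A_le (hk : 2 ≤ k) : Algebra.trdeg ℂ (A k) ≤ (5 : ℕ) := by
  have := isDomain_A hk
  classical
  let T : Finset (A k) :=
    {mkA k (xv k 0), mkA k (xv k 1), mkA k (av k), mkA k (bv k), mkA k (cv k)}
  let L := Algebra.adjoin ℂ (T : Set (A k))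
  have hT : ∀ t ∈ T, IsAlgebraic L t := fun t ht =>
    isAlgebraic_algebraMap (⟨t, Algebra.subset_adjoin ht⟩ : L)
  have h0 : IsAlgebraic L (mkA k (xv k 0)) := hT _ (by simp [T])
  have h1 : IsAlgebraic L (mkA k (xv k 1)) := hT _ (by simp [T])
  have ha : IsAlgebraic L (mkA k (av k)) := hT _ (by simp [T])
  have hb : IsAlgebraic L (mkA k (bv k)) := hT _ (by simp [T])
  have hc : IsAlgebraic L (mkA k (cv k)) := hT _ (by simp [T])
  have hc0 := mem_nonZeroDivisors_of_ne_zero (mkA_c_ne_zero hk)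
  have hx : ∀ i, i ≤ k → IsAlgebraic L (mkA k (xv k i)) := by
    intro i
    induction i using Nat.twoStepInduction with
    | zero => exact fun _ => h0
    | one => exact fun _ => h1
    | more i ih0 ih1 =>
      intro hi
      refine IsAlgebraic.of_mul hc0 hc ?_
      have e : mkA k (cv k) * mkA k (xv k (i + 2))
          = -(mkA k (av k) * mkA k (xv k i) + mkA k (bv k) * mkA k (xv k (i + 1))) := by
        linear_combination recurrence_A (k := k) hi
      rw [e]
      exact ((ha.mul (ih0 (by omega))).add (hb.mul (ih1 (by omega)))).neg
  have hz : IsAlgebraic L (mkA k (zv k)) := by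
    refine IsAlgebraic.of_mul (pow_mem hc0 (k - 2)) (hc.pow _) ?_
    have e := cramer_A hk (p := 0) (q := 1) (by omega) (by omega)
    have e' : k - 1 - 1 = k - 2 := by omega
    simp only [Nat.sub_zero, Nat.sub_self, cont, pow_zero, one_mul, e', zero_add] at e
    rw [mul_comm, ← e]
    exact ((hx _ (by omega)).mul (hx _ (by omega))).sub ((hx _ (by omega)).mul (hx _ (by omega)))
  have halg : Algebra.IsAlgebraic L (A k) := by
    constructor
    intro f
    obtain ⟨f, rfl⟩ := mkA_surjective f
    induction f using MvPolynomial.induction_on with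
    | C r =>
      rw [← MvPolynomial.algebraMap_eq, AlgHom.commutes]
      exact isAlgebraic_algebraMap (algebraMap ℂ L r)
    | add p q hp hq => rw [map_add]; exact hp.add hq
    | mul_X p n hp =>
      rw [map_mul]
      refine hp.mul ?_
      rcases n with i | n
      · have h : (X (Sum.inl i) : R k) = xv k i := (xv_of_le (by omega)).symm
        rw [h]
        exact hx i (by omega)
      · fin_cases n
        exacts [ha, hb, hc, hz]
  refine (Algebra.IsAlgebraic.trdeg_le_cardinalMk ℂ (T : Set (A k))).trans ?_
  simp only [Finset.coe_sort_coe, Cardinal.mk_coe_finset, Nat.cast_le]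
  exact Finset.card_le_five

variable (k) in
/-- The homomorphism with `x_0, b, c` free and all other variables sent to `0`. -/
def chiR : R k →ₐ[ℂ] MvPolynomial (Fin 3) ℂ :=
  aeval (Sum.elim (fun i : Fin (k + 1) => if (i : ℕ) = 0 then X 0 else 0) ![0, X 1, X 2, 0])

lemma chiR_x_succ (i : ℕ) : chiR k (xv k (i + 1)) = 0 := by
  by_cases hi : i + 1 ≤ k
  · simp [chiR, xv_of_le hi]
  · simp [xv, hi]

lemma Ik_le_ker_chiR (hk : 2 ≤ k) :
    Ik k ≤ RingHom.ker (chiR k : R k →+* MvPolynomial (Fin 3) ℂ) := by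
  have ha : chiR k (av k) = 0 := by simp [chiR, av]
  have hz : chiR k (zv k) = 0 := by simp [chiR, zv]
  refine Ik_le_ker hk (chiR k : R k →+* MvPolynomial (Fin 3) ℂ) ?_ ?_
  · intro i hi
    simp [ha, chiR_x_succ]
  · intro p q hpq hq
    simp [hz, chiR_x_succ]

lemma chiR_surjective : Function.Surjective (chiR k) := by
  intro f
  induction f using MvPolynomial.induction_on with
  | C r => exact ⟨C r, by rw [← MvPolynomial.algebraMap_eq, AlgHom.commutes]; rfl⟩
  | add p q hp hq =>
    obtain ⟨p, rfl⟩ := hp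
    obtain ⟨q, rfl⟩ := hq
    exact ⟨p + q, map_add _ _ _⟩
  | mul_X p n hp =>
    obtain ⟨p, rfl⟩ := hp
    have : ∃ g, chiR k g = X n := by
      fin_cases n
      · exact ⟨X (Sum.inl 0), by simp [chiR]⟩
      · exact ⟨X (Sum.inr 1), by simp [chiR]⟩
      · exact ⟨X (Sum.inr 2), by simp [chiR]⟩
    obtain ⟨g, hg⟩ := this
    exact ⟨p * g, by rw [map_mul, hg]⟩

/-- The surjections `A k → A k / (z) → ℂ[x_0, b, c]`, between domains and with nonzero kernels,
show that the dimension is at least `3 + 1 + 1`. -/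
lemma five_le_ringKrullDim (hk : 2 ≤ k) : 5 ≤ ringKrullDim (A k) := by
  have := isDomain_A hk
  let φ₀ : A k →+* S := (Polynomial.evalRingHom 0).comp (phiA hk)
  have hφ₀ : ∀ f, φ₀ (mkA k f) = mkS (psi k f) := by
    intro f
    rw [← eval_phiR, ← phiA_mk hk]
    rfl
  let χ : A k →+* MvPolynomial (Fin 3) ℂ :=
    liftA (chiR k : R k →+* MvPolynomial (Fin 3) ℂ) (Ik_le_ker_chiR hk)
  have hχ : ∀ f ∈ RingHom.ker φ₀, χ f = 0 := by
    intro f hf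
    obtain ⟨f, rfl⟩ := mkA_surjective f
    rw [RingHom.mem_ker, hφ₀, mkS_eq_zero] at hf
    obtain ⟨g, hg⟩ := z_dvd_of_psi hk hf
    have hz : χ (mkA k (zv k)) = 0 := by
      rw [liftA_mk]
      simp [chiR, zv]
    rw [hg, map_mul, hz, zero_mul]
  have hprime : (RingHom.ker φ₀).IsPrime := RingHom.ker_isPrime φ₀
  have d1 : ringKrullDim (A k ⧸ RingHom.ker φ₀) + 1 ≤ ringKrullDim (A k) := by
    refine ringKrullDim_succ_le_of_surjective (Ideal.Quotient.mk (RingHom.ker φ₀))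
      Ideal.Quotient.mk_surjective (r := mkA k (zv k)) (mem_nonZeroDivisors_of_ne_zero ?_) ?_
    · intro h
      exact phiA_z_ne_zero hk (by rw [h, map_zero])
    · rw [Ideal.Quotient.eq_zero_iff_mem, RingHom.mem_ker, hφ₀]
      simp [psi, zv]
  have d2 : ringKrullDim (MvPolynomial (Fin 3) ℂ) + 1 ≤ ringKrullDim (A k ⧸ RingHom.ker φ₀) := by
    refine ringKrullDim_succ_le_of_surjective (Ideal.Quotient.lift (RingHom.ker φ₀) χ hχ) ?_
      (r := Ideal.Quotient.mk _ (mkA k (av k))) (mem_nonZeroDivisors_of_ne_zero ?_) ?_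
    · apply Ideal.Quotient.lift_surjective_of_surjective
      intro f
      obtain ⟨g, rfl⟩ := chiR_surjective (k := k) f
      exact ⟨mkA k g, liftA_mk _ _ _⟩
    · rw [Ne, Ideal.Quotient.eq_zero_iff_mem, RingHom.mem_ker, hφ₀]
      have : psi k (av k) = X 2 := by simp [psi, av]
      rw [this]
      exact y_ne_zero (i := 2) (by decide)
    · rw [Ideal.Quotient.lift_mk, liftA_mk]
      simp [chiR, av]
  have d3 : ringKrullDim (MvPolynomial (Fin 3) ℂ) = 3 := by
    rw [MvPolynomial.ringKrullDim_of_isNoetherianRing, ringKrullDim_eq_zero_of_field]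
    simp
  rw [d3] at d2
  calc (5 : WithBot ℕ∞) = 3 + 1 + 1 := by norm_num
    _ ≤ ringKrullDim (A k ⧸ RingHom.ker φ₀) + 1 := by gcongr
    _ ≤ _ := d1

lemma ringKrullDim_A (hk : 2 ≤ k) : ringKrullDim (A k) = 5 := by
  have := isDomain_A hk
  exact le_antisymm (ringKrullDim_le_of_trdeg_le (trdeg_A_le hk)) (five_le_ringKrullDim hk)

lemma domain_and_dim (hk : 2 ≤ k) :
    IsDomain (R k ⧸ Ik k) ∧ ringKrullDim (R k ⧸ Ik k) = 5 :=
  ⟨isDomain_A hk, ringKrullDim_A hk⟩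

/-- For `k = 2` the only Cramer relation is `x_0 x_2 - x_1² = z`. -/
lemma Ik_two : Ik 2 = Ideal.span
    ({av 2 * xv 2 0 + bv 2 * xv 2 1 + cv 2 * xv 2 2,
      zv 2 - (xv 2 0 * xv 2 2 - xv 2 1 ^ 2)} : Set (R 2)) := by
  have h0 : cont (av 2 * cv 2) (bv 2) 0 = 1 := rfl
  apply le_antisymm
  · rw [Ik, Ideal.span_le]
    rintro P (⟨i, hi1, hi2, rfl⟩ | ⟨p, q, hpq, hq, rfl⟩)
    · obtain rfl : i = 1 := by omega
      exact Ideal.subset_span (Or.inl rfl)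
    · obtain rfl : q = 1 := by omega
      obtain rfl : p = 0 := by omega
      rw [SetLike.mem_coe, ← neg_mem_iff, det_Nsub le_rfl (by omega) (by omega)]
      refine Ideal.subset_span (Or.inr ?_)
      simp [h0]
      ring
  · rw [Ideal.span_le]
    rintro P (rfl | rfl)
    · exact recurrence_mem (k := 2) (i := 0) le_rfl
    · have := neg_mem (cramer_mem (k := 2) le_rfl (p := 0) (q := 1) (by omega) (by omega))
      convert this using 1
      simp [h0]
      ring_nf

end Vk

/-- For every `k ≥ 3`, `ℂ[x_0,…,x_k,a,b,c,z]/I(k)` is an integral domain of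
Krull dimension `5`; moreover for `k = 2`, with the Cramer relations replaced
by the single equation `z = x_0 x_2 - x_1²`, the analogous quotient is also
an integral domain of Krull dimension `5`. -/
theorem Vk_isDomain_and_dim_eq_five :
    (∀ k : ℕ, 3 ≤ k →
      IsDomain (Vk.R k ⧸ Vk.Ik k) ∧ ringKrullDim (Vk.R k ⧸ Vk.Ik k) = 5) ∧
    (IsDomain (Vk.R 2 ⧸ (Ideal.span
        ({Vk.av 2 * Vk.xv 2 0 + Vk.bv 2 * Vk.xv 2 1 + Vk.cv 2 * Vk.xv 2 2,
          Vk.zv 2 - (Vk.xv 2 0 * Vk.xv 2 2 - Vk.xv 2 1 ^ 2)} : Set (Vk.R 2)))) ∧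
      ringKrullDim (Vk.R 2 ⧸ (Ideal.span
        ({Vk.av 2 * Vk.xv 2 0 + Vk.bv 2 * Vk.xv 2 1 + Vk.cv 2 * Vk.xv 2 2,
          Vk.zv 2 - (Vk.xv 2 0 * Vk.xv 2 2 - Vk.xv 2 1 ^ 2)} : Set (Vk.R 2)))) = 5) := by
  refine ⟨fun k hk => Vk.domain_and_dim (by omega), ?_⟩
  rw [← Vk.Ik_two]
  exact Vk.domain_and_dim le_rfl
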